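/- Let γ : ℝ × [0,T) → ℝ² be a smooth family of closed regular plane curves satisfying the curve diffusion flow equation ∂_t γ = −κ_ss ν, and suppose the signed enclosed area satisfies A(0) ≠ 0. Then the signed isoperimetric ratio I(t) = L(t)² / (4π A(t)) satisfies I(t) = I(0) · exp(−∫₀^t (2/L(τ)) ∫₀^{2π} (κ_s)² |∂_u γ| du dτ) for all t ∈ [0,T); in particular |I(t)| is monotone nonincreasing. -/

import Mathlib

open Real MeasureTheory Filter

/-- Euclidean inner product on `ℝ × ℝ`. -/
def innerP (a b : ℝ × ℝ) : ℝ := a.1 * b.1 + a.2 * b.2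

/-- Speed `|γ'|` of a plane curve in a general parametrisation. -/
noncomputable def speed (γ : ℝ → ℝ × ℝ) (u : ℝ) : ℝ :=
  Real.sqrt ((deriv γ u).1 ^ 2 + (deriv γ u).2 ^ 2)

/-- Unit normal `ν = |γ'|⁻¹ (y', -x')`. -/
noncomputable def nuG (γ : ℝ → ℝ × ℝ) (u : ℝ) : ℝ × ℝ :=
  ((deriv γ u).2 / speed γ u, -(deriv γ u).1 / speed γ u)

/-- Arc-length derivative `∂_s = |γ'|⁻¹ ∂_u` of a scalar function. -/
noncomputable def arcD (γ : ℝ → ℝ × ℝ) (f : ℝ → ℝ) (u : ℝ) : ℝ :=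
  (speed γ u)⁻¹ * deriv f u

/-- Arc-length derivative of a vector-valued function. -/
noncomputable def arcDV (γ : ℝ → ℝ × ℝ) (F : ℝ → ℝ × ℝ) (u : ℝ) : ℝ × ℝ :=
  (speed γ u)⁻¹ • deriv F u

/-- Curvature `κ = ⟨∂_s² γ, ν⟩`. -/
noncomputable def curvG (γ : ℝ → ℝ × ℝ) (u : ℝ) : ℝ :=
  innerP (arcDV γ (arcDV γ γ) u) (nuG γ u)

/-- `κ_s`, the arc-length derivative of the curvature. -/
noncomputable def curvGS (γ : ℝ → ℝ × ℝ) (u : ℝ) : ℝ := arcD γ (curvG γ) u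

/-- `κ_ss`, the second arc-length derivative of the curvature. -/
noncomputable def curvGSS (γ : ℝ → ℝ × ℝ) (u : ℝ) : ℝ := arcD γ (curvGS γ) u

/-- Length of the closed curve `γ(·,t)` over one period `[0, 2π]`. -/
noncomputable def clen (γ : ℝ → ℝ → ℝ × ℝ) (t : ℝ) : ℝ :=
  ∫ u in (0:ℝ)..(2 * Real.pi), speed (fun u' => γ u' t) u

/-- Signed enclosed area `A(t) = (1/2) ∫₀^{2π} (x y_u − y x_u) du`. -/
noncomputable def signedArea (γ : ℝ → ℝ → ℝ × ℝ) (t : ℝ) : ℝ :=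
  (1/2) * ∫ u in (0:ℝ)..(2 * Real.pi),
    ((γ u t).1 * deriv (fun u' => (γ u' t).2) u - (γ u t).2 * deriv (fun u' => (γ u' t).1) u)

/-- Signed isoperimetric ratio `I(t) = L(t)² / (4π A(t))`. -/
noncomputable def isoRatio (γ : ℝ → ℝ → ℝ × ℝ) (t : ℝ) : ℝ :=
  (clen γ t) ^ 2 / (4 * Real.pi * signedArea γ t)

open scoped ContDiff Topology

/-- Joint smoothness of a one-parameter family `F u t` for `u ∈ ℝ` and `t ∈ I`. -/
def SmoothFamily {E : Type*} [NormedAddCommGroup E] [NormedSpace ℝ E]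
    (I : Set ℝ) (F : ℝ → ℝ → E) : Prop :=
  ContDiffOn ℝ ∞ (fun p : ℝ × ℝ => F p.1 p.2) (Set.univ ×ˢ I)

namespace SmoothFamily

variable {E : Type*} [NormedAddCommGroup E] [NormedSpace ℝ E] {I : Set ℝ} {F : ℝ → ℝ → E}
  {u t : ℝ}

theorem mono {J : Set ℝ} (hF : SmoothFamily I F) (hJ : J ⊆ I) : SmoothFamily J F :=
  ContDiffOn.mono hF (Set.prod_mono_right hJ)

theorem contDiff_slice (hF : SmoothFamily I F) (ht : t ∈ I) : ContDiff ℝ ∞ fun u => F u t := by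
  rw [← contDiffOn_univ]
  exact ContDiffOn.comp (f := fun u : ℝ => (u, t)) hF
    (contDiff_id.prodMk contDiff_const).contDiffOn fun u _ => ⟨Set.mem_univ u, ht⟩

theorem hasDerivAt_slice (hF : SmoothFamily I F) (ht : t ∈ I) (u : ℝ) :
    HasDerivAt (fun u' => F u' t) (deriv (fun u' => F u' t) u) u :=
  ((hF.contDiff_slice ht).differentiable (by simp) u).hasDerivAt

/-- The spatial derivative of a smooth family is a smooth family. -/
theorem deriv_space (hI : UniqueDiffOn ℝ I) (hF : SmoothFamily I F) :
    SmoothFamily I fun u t => deriv (fun u' => F u' t) u := by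
  have hS : UniqueDiffOn ℝ ((Set.univ : Set ℝ) ×ˢ I) := uniqueDiffOn_univ.prod hI
  have h := (ContDiffOn.fderivWithin (m := ∞) hF hS (by simp)).clm_apply
    (contDiffOn_const (c := ((1 : ℝ), (0 : ℝ))))
  refine h.congr fun p hp => ?_
  have hd := (ContDiffOn.differentiableOn hF (by simp) p hp).hasFDerivWithinAt
  have hc : HasDerivWithinAt (fun u : ℝ => (u, p.2)) ((1 : ℝ), (0 : ℝ)) Set.univ p.1 :=
    ((hasDerivAt_id p.1).prodMk (hasDerivAt_const p.1 p.2)).hasDerivWithinAt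
  have hmaps : Set.MapsTo (fun u : ℝ => (u, p.2)) Set.univ (Set.univ ×ˢ I) :=
    fun u _ => ⟨Set.mem_univ u, hp.2⟩
  have := hd.comp_hasDerivWithinAt p.1 hc hmaps
  exact (hasDerivWithinAt_univ.1 this).deriv

theorem contDiffAt (hF : SmoothFamily I F) (hI : IsOpen I) (ht : t ∈ I) (u : ℝ) :
    ContDiffAt ℝ ∞ (fun p : ℝ × ℝ => F p.1 p.2) (u, t) :=
  ContDiffOn.contDiffAt hF ((isOpen_univ.prod hI).mem_nhds ⟨Set.mem_univ u, ht⟩)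

theorem hasDerivAt_time_fderiv (hF : SmoothFamily I F) (hI : IsOpen I) (ht : t ∈ I) (u : ℝ) :
    HasDerivAt (fun t' => F u t') (fderiv ℝ (fun p : ℝ × ℝ => F p.1 p.2) (u, t) (0, 1)) t :=
  ((hF.contDiffAt hI ht u).differentiableAt (by simp)).hasFDerivAt.comp_hasDerivAt t
    ((hasDerivAt_const t u).prodMk (hasDerivAt_id t))

theorem hasDerivAt_space_fderiv (hF : SmoothFamily I F) (hI : IsOpen I) (ht : t ∈ I) (u : ℝ) :
    HasDerivAt (fun u' => F u' t) (fderiv ℝ (fun p : ℝ × ℝ => F p.1 p.2) (u, t) (1, 0)) u :=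
  ((hF.contDiffAt hI ht u).differentiableAt (by simp)).hasFDerivAt.comp_hasDerivAt
    (f := fun u' => (u', t)) u ((hasDerivAt_id u).prodMk (hasDerivAt_const u t))

theorem hasDerivAt_time (hF : SmoothFamily I F) (hI : IsOpen I) (ht : t ∈ I) (u : ℝ) :
    HasDerivAt (fun t' => F u t') (deriv (fun t' => F u t') t) t :=
  (hF.hasDerivAt_time_fderiv hI ht u).differentiableAt.hasDerivAt

/-- The time derivative of a smooth family over an open set of times is a smooth family. -/
theorem deriv_time (hI : IsOpen I) (hF : SmoothFamily I F) :
    SmoothFamily I fun u t => deriv (fun t' => F u t') t := by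
  have h := (ContDiffOn.fderiv_of_isOpen (m := ∞) hF (isOpen_univ.prod hI) (by simp)).clm_apply
    (contDiffOn_const (c := ((0 : ℝ), (1 : ℝ))))
  exact h.congr fun p hp => (hF.hasDerivAt_time_fderiv hI hp.2 p.1).deriv

/-- Space and time derivatives of a smooth family commute. -/
theorem deriv_comm (hF : SmoothFamily I F) (hI : IsOpen I) (ht : t ∈ I) (u : ℝ) :
    deriv (fun t' => deriv (fun u' => F u' t') u) t =
      deriv (fun u' => deriv (fun t' => F u' t') t) u := by
  set G : ℝ × ℝ → E := fun p => F p.1 p.2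
  have hG := hF.contDiffAt hI ht u
  have hsymm : IsSymmSndFDerivAt ℝ G (u, t) :=
    hG.isSymmSndFDerivAt (by simpa using WithTop.coe_le_coe.2 (le_top : (2 : ℕ∞) ≤ ⊤))
  have hd : HasFDerivAt (fderiv ℝ G) (fderiv ℝ (fderiv ℝ G) (u, t)) (u, t) :=
    ((hG.fderiv_right (m := ∞) (by simp)).differentiableAt (by simp)).hasFDerivAt
  have h₁ : HasDerivAt (fun t' => fderiv ℝ G (u, t') (1, 0))
      (fderiv ℝ (fderiv ℝ G) (u, t) (0, 1) (1, 0)) t := by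
    simpa using (hd.comp_hasDerivAt t ((hasDerivAt_const t u).prodMk (hasDerivAt_id t))).clm_apply
      (hasDerivAt_const t ((1 : ℝ), (0 : ℝ)))
  have h₂ : HasDerivAt (fun u' => fderiv ℝ G (u', t) (0, 1))
      (fderiv ℝ (fderiv ℝ G) (u, t) (1, 0) (0, 1)) u := by
    simpa using (hd.comp_hasDerivAt (f := fun u' => (u', t)) u
      ((hasDerivAt_id u).prodMk (hasDerivAt_const u t))).clm_apply
      (hasDerivAt_const u ((0 : ℝ), (1 : ℝ)))
  have e₁ : (fun t' => deriv (fun u' => F u' t') u) =ᶠ[𝓝 t]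
      fun t' => fderiv ℝ G (u, t') (1, 0) := by
    filter_upwards [hI.mem_nhds ht] with t' ht'
    exact (hF.hasDerivAt_space_fderiv hI ht' u).deriv
  have e₂ : (fun u' => deriv (fun t' => F u' t') t) = fun u' => fderiv ℝ G (u', t) (0, 1) :=
    funext fun u' => (hF.hasDerivAt_time_fderiv hI ht u').deriv
  rw [e₁.deriv_eq, e₂, h₁.deriv, h₂.deriv, hsymm (1, 0) (0, 1)]

theorem continuousOn_integral (hF : SmoothFamily I F) (a b : ℝ) :
    ContinuousOn (fun t => ∫ u in a..b, F u t) I := by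
  rw [continuousOn_iff_continuous_domRestrict]
  refine intervalIntegral.continuous_parametric_intervalIntegral_of_continuous'
    (f := fun (t : I) u => F u t) ?_ a b
  exact (ContDiffOn.continuousOn hF).comp_continuous (f := fun q : I × ℝ => (q.2, (q.1 : ℝ)))
    (by fun_prop) fun q => ⟨Set.mem_univ _, q.1.2⟩

/-- Differentiation under the integral sign for smooth families. -/
theorem hasDerivAt_integral (hF : SmoothFamily I F) (hI : IsOpen I) (ht : t ∈ I) (a b : ℝ) :
    HasDerivAt (fun t' => ∫ u in a..b, F u t') (∫ u in a..b, deriv (fun t' => F u t') t) t := by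
  obtain ⟨r, hr, hrI⟩ := Metric.nhds_basis_closedBall.mem_iff.1 (hI.mem_nhds ht)
  have hF' := hF.deriv_time hI
  have hK : IsCompact (Set.uIcc a b ×ˢ Metric.closedBall t r) :=
    isCompact_uIcc.prod (isCompact_closedBall t r)
  obtain ⟨C, hC⟩ := hK.exists_bound_of_continuousOn
    ((ContDiffOn.continuousOn hF').mono (Set.prod_mono (Set.subset_univ _) hrI))
  refine (intervalIntegral.hasDerivAt_integral_of_dominated_loc_of_deriv_le
    (F := fun t' u => F u t') (F' := fun t' u => deriv (fun t'' => F u t'') t')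
    (bound := fun _ => C) (Metric.closedBall_mem_nhds t hr) ?_ ?_ ?_ ?_ ?_ ?_).2
  · filter_upwards [hI.mem_nhds ht] with t' ht'
    exact (hF.contDiff_slice ht').continuous.aestronglyMeasurable
  · exact (hF.contDiff_slice ht).continuous.intervalIntegrable a b
  · exact (hF'.contDiff_slice ht).continuous.aestronglyMeasurable
  · exact .of_forall fun u hu t' ht' => hC (u, t') ⟨Set.uIoc_subset_uIcc hu, ht'⟩
  · exact intervalIntegrable_const
  · exact .of_forall fun u _ t' ht' => hF.hasDerivAt_time hI (hrI ht') u

end SmoothFamily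

theorem HasDerivAt.fst_component {f : ℝ → ℝ × ℝ} {f' : ℝ × ℝ} {x : ℝ} (h : HasDerivAt f f' x) :
    HasDerivAt (fun x => (f x).1) f'.1 x :=
  (ContinuousLinearMap.fst ℝ ℝ ℝ).hasFDerivAt.comp_hasDerivAt x h

theorem HasDerivAt.snd_component {f : ℝ → ℝ × ℝ} {f' : ℝ × ℝ} {x : ℝ} (h : HasDerivAt f f' x) :
    HasDerivAt (fun x => (f x).2) f'.2 x :=
  (ContinuousLinearMap.snd ℝ ℝ ℝ).hasFDerivAt.comp_hasDerivAt x h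

theorem Function.Periodic.deriv_real {E : Type*} [NormedAddCommGroup E] [NormedSpace ℝ E]
    {f : ℝ → E} {c : ℝ} (h : Function.Periodic f c) : Function.Periodic (deriv f) c := fun x => by
  rw [← deriv_comp_add_const f c x, funext h]

theorem speed_sq_arg_pos {c : ℝ → ℝ × ℝ} {u : ℝ} (h : deriv c u ≠ 0) :
    0 < (deriv c u).1 ^ 2 + (deriv c u).2 ^ 2 := by
  by_contra! hle
  have h₁ := sq_nonneg (deriv c u).1
  have h₂ := sq_nonneg (deriv c u).2
  exact h (Prod.ext ((pow_eq_zero_iff two_ne_zero).1 (by linarith))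
    ((pow_eq_zero_iff two_ne_zero).1 (by linarith)))

theorem speed_pos {c : ℝ → ℝ × ℝ} {u : ℝ} (h : deriv c u ≠ 0) : 0 < speed c u :=
  Real.sqrt_pos.2 (speed_sq_arg_pos h)

section Periodic

variable {c : ℝ → ℝ × ℝ} {p : ℝ}

theorem speed_periodic (h : Function.Periodic c p) : Function.Periodic (speed c) p := fun u => by
  simp only [speed, h.deriv_real u]

theorem nuG_periodic (h : Function.Periodic c p) : Function.Periodic (nuG c) p := fun u => by
  simp only [nuG, h.deriv_real u, speed_periodic h u]

theorem arcD_periodic (h : Function.Periodic c p) {f : ℝ → ℝ} (hf : Function.Periodic f p) :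
    Function.Periodic (arcD c f) p := fun u => by
  simp only [arcD, hf.deriv_real u, speed_periodic h u]

theorem arcDV_periodic (h : Function.Periodic c p) {f : ℝ → ℝ × ℝ} (hf : Function.Periodic f p) :
    Function.Periodic (arcDV c f) p := fun u => by
  simp only [arcDV, hf.deriv_real u, speed_periodic h u]

theorem curvG_periodic (h : Function.Periodic c p) : Function.Periodic (curvG c) p := fun u => by
  simp only [curvG, arcDV_periodic h (arcDV_periodic h h) u, nuG_periodic h u]

theorem curvGS_periodic (h : Function.Periodic c p) : Function.Periodic (curvGS c) p :=
  arcD_periodic h (curvG_periodic h)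

theorem curvGSS_periodic (h : Function.Periodic c p) : Function.Periodic (curvGSS c) p :=
  arcD_periodic h (curvGS_periodic h)

end Periodic

namespace SmoothFamily

variable {I : Set ℝ} {γ : ℝ → ℝ → ℝ × ℝ}

theorem speed (hI : UniqueDiffOn ℝ I) (hγ : SmoothFamily I γ)
    (hreg : ∀ u, ∀ t ∈ I, deriv (fun u' => γ u' t) u ≠ 0) :
    SmoothFamily I fun u t => speed (fun u' => γ u' t) u :=
  (((hγ.deriv_space hI).fst.pow 2).add ((hγ.deriv_space hI).snd.pow 2)).sqrt
    fun p hp => (speed_sq_arg_pos (hreg p.1 p.2 hp.2)).ne'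

theorem nuG (hI : UniqueDiffOn ℝ I) (hγ : SmoothFamily I γ)
    (hreg : ∀ u, ∀ t ∈ I, deriv (fun u' => γ u' t) u ≠ 0) :
    SmoothFamily I fun u t => nuG (fun u' => γ u' t) u :=
  have hne : ∀ p ∈ Set.univ ×ˢ I, _root_.speed (fun u' => γ u' p.2) p.1 ≠ 0 :=
    fun p hp => (speed_pos (hreg p.1 p.2 hp.2)).ne'
  ((hγ.deriv_space hI).snd.div (hγ.speed hI hreg) hne).prodMk
    ((hγ.deriv_space hI).fst.neg.div (hγ.speed hI hreg) hne)

theorem speed_inv (hI : UniqueDiffOn ℝ I) (hγ : SmoothFamily I γ)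
    (hreg : ∀ u, ∀ t ∈ I, deriv (fun u' => γ u' t) u ≠ 0) :
    SmoothFamily I fun u t => (_root_.speed (fun u' => γ u' t) u)⁻¹ :=
  ContDiffOn.inv (hγ.speed hI hreg) fun p hp => (speed_pos (hreg p.1 p.2 hp.2)).ne'

theorem arcD (hI : UniqueDiffOn ℝ I) (hγ : SmoothFamily I γ)
    (hreg : ∀ u, ∀ t ∈ I, deriv (fun u' => γ u' t) u ≠ 0) {f : ℝ → ℝ → ℝ}
    (hf : SmoothFamily I f) :
    SmoothFamily I fun u t => arcD (fun u' => γ u' t) (fun u' => f u' t) u :=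
  ContDiffOn.mul (hγ.speed_inv hI hreg) (hf.deriv_space hI)

theorem arcDV (hI : UniqueDiffOn ℝ I) (hγ : SmoothFamily I γ)
    (hreg : ∀ u, ∀ t ∈ I, deriv (fun u' => γ u' t) u ≠ 0) {f : ℝ → ℝ → ℝ × ℝ}
    (hf : SmoothFamily I f) :
    SmoothFamily I fun u t => arcDV (fun u' => γ u' t) (fun u' => f u' t) u :=
  ContDiffOn.smul (hγ.speed_inv hI hreg) (hf.deriv_space hI)

theorem curvG (hI : UniqueDiffOn ℝ I) (hγ : SmoothFamily I γ)
    (hreg : ∀ u, ∀ t ∈ I, deriv (fun u' => γ u' t) u ≠ 0) :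
    SmoothFamily I fun u t => curvG (fun u' => γ u' t) u :=
  have hk := hγ.arcDV hI hreg (hγ.arcDV hI hreg hγ)
  have hν := hγ.nuG hI hreg
  (hk.fst.mul hν.fst).add (hk.snd.mul hν.snd)

theorem curvGS (hI : UniqueDiffOn ℝ I) (hγ : SmoothFamily I γ)
    (hreg : ∀ u, ∀ t ∈ I, deriv (fun u' => γ u' t) u ≠ 0) :
    SmoothFamily I fun u t => curvGS (fun u' => γ u' t) u :=
  hγ.arcD hI hreg (hγ.curvG hI hreg)

theorem curvGSS (hI : UniqueDiffOn ℝ I) (hγ : SmoothFamily I γ)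
    (hreg : ∀ u, ∀ t ∈ I, deriv (fun u' => γ u' t) u ≠ 0) :
    SmoothFamily I fun u t => curvGSS (fun u' => γ u' t) u :=
  hγ.arcD hI hreg (hγ.curvGS hI hreg)

end SmoothFamily

/-- In terms of the normal `ν = (ν₁, ν₂)`, the unit tangent is `(-ν₂, ν₁)`. -/
theorem arcDV_self (c : ℝ → ℝ × ℝ) : arcDV c c = fun u => (-(nuG c u).2, (nuG c u).1) := by
  funext u
  ext <;> simp only [arcDV, nuG, Prod.smul_fst, Prod.smul_snd, smul_eq_mul] <;> ring

theorem deriv_eq_speed_smul {c : ℝ → ℝ × ℝ} {u : ℝ} (h : deriv c u ≠ 0) :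
    deriv c u = (-(speed c u * (nuG c u).2), speed c u * (nuG c u).1) := by
  have hv := (speed_pos h).ne'
  ext <;> simp only [nuG] <;> field_simp

/-- Frenet formula for the curvature in terms of the derivative of the normal. -/
theorem curvG_mul_speed {c : ℝ → ℝ × ℝ} {u : ℝ} {n : ℝ × ℝ} (h : deriv c u ≠ 0)
    (hn : HasDerivAt (nuG c) n u) :
    curvG c u * speed c u = n.1 * (nuG c u).2 - n.2 * (nuG c u).1 := by
  have hv := (speed_pos h).ne'
  have hd : deriv (arcDV c c) u = (-n.2, n.1) := by
    rw [arcDV_self]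
    exact (hn.snd_component.neg.prodMk hn.fst_component).deriv
  rw [curvG, innerP, arcDV, hd]
  simp only [Prod.smul_fst, Prod.smul_snd, smul_eq_mul]
  field_simp
  ring

theorem nuG_unit {c : ℝ → ℝ × ℝ} {u : ℝ} (h : deriv c u ≠ 0) :
    (nuG c u).1 ^ 2 + (nuG c u).2 ^ 2 = 1 := by
  have hv := speed_pos h
  have hs : speed c u ^ 2 = (deriv c u).1 ^ 2 + (deriv c u).2 ^ 2 :=
    Real.sq_sqrt (speed_sq_arg_pos h).le
  simp only [nuG]
  field_simp
  linarith

/-- First variation of the speed under the normal velocity `-k ν`. -/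
theorem inner_deriv_normal_velocity {c : ℝ → ℝ × ℝ} {k : ℝ → ℝ} {u : ℝ} (h : deriv c u ≠ 0)
    (hν : DifferentiableAt ℝ (nuG c) u) (hk : DifferentiableAt ℝ k u) :
    innerP (deriv c u) (deriv (fun u' => (-k u') • nuG c u') u) =
      k u * curvG c u * speed c u * speed c u := by
  have hn := hν.hasDerivAt
  have hd : deriv (fun u' => (-k u') • nuG c u') u =
      -k u • deriv (nuG c) u + -deriv k u • nuG c u := (hk.hasDerivAt.neg.smul hn).deriv
  rw [hd, mul_assoc (k u), curvG_mul_speed h hn, deriv_eq_speed_smul h]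
  simp only [innerP, Prod.fst_add, Prod.snd_add, Prod.smul_fst, Prod.smul_snd, smul_eq_mul]
  ring

theorem deriv_curvG {c : ℝ → ℝ × ℝ} {u : ℝ} (h : deriv c u ≠ 0) :
    deriv (curvG c) u = curvGS c u * speed c u := by
  have hv := (speed_pos h).ne'
  simp only [curvGS, arcD]
  field_simp

theorem deriv_curvGS {c : ℝ → ℝ × ℝ} {u : ℝ} (h : deriv c u ≠ 0) :
    deriv (curvGS c) u = curvGSS c u * speed c u := by
  have hv := (speed_pos h).ne'
  simp only [curvGSS, arcD]
  field_simp

theorem integral_eq_zero_of_hasDerivAt_periodic {f f' : ℝ → ℝ} {p : ℝ}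
    (hf : ∀ u, HasDerivAt f (f' u) u) (hf' : Continuous f') (hp : Function.Periodic f p) :
    ∫ u in (0 : ℝ)..p, f' u = 0 := by
  rw [intervalIntegral.integral_eq_sub_of_hasDerivAt (fun u _ => hf u)
    (hf'.intervalIntegrable 0 p), ← zero_add p, hp 0, sub_self]

section Flow

variable {I : Set ℝ} {γ : ℝ → ℝ → ℝ × ℝ} {t : ℝ}

/-- The Dirichlet energy `∫ κ_s² ds` of the curvature of `γ(·,t)`. -/
noncomputable def curvEnergy (γ : ℝ → ℝ → ℝ × ℝ) (t : ℝ) : ℝ :=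
  ∫ u in (0 : ℝ)..(2 * Real.pi), (curvGS (fun u' => γ u' t) u) ^ 2 * speed (fun u' => γ u' t) u

theorem clen_pos (hγ : SmoothFamily I γ) (hI : UniqueDiffOn ℝ I)
    (hreg : ∀ u, ∀ t ∈ I, deriv (fun u' => γ u' t) u ≠ 0) (ht : t ∈ I) : 0 < clen γ t :=
  intervalIntegral.intervalIntegral_pos_of_pos
    (((hγ.speed hI hreg).contDiff_slice ht).continuous.intervalIntegrable _ _)
    (fun u => speed_pos (hreg u t ht)) Real.two_pi_pos

theorem curvEnergy_nonneg (γ : ℝ → ℝ → ℝ × ℝ) (t : ℝ) : 0 ≤ curvEnergy γ t :=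
  intervalIntegral.integral_nonneg Real.two_pi_pos.le fun _ _ =>
    mul_nonneg (sq_nonneg _) (Real.sqrt_nonneg _)

theorem continuousOn_clen (hγ : SmoothFamily I γ) (hI : UniqueDiffOn ℝ I)
    (hreg : ∀ u, ∀ t ∈ I, deriv (fun u' => γ u' t) u ≠ 0) : ContinuousOn (clen γ) I :=
  (hγ.speed hI hreg).continuousOn_integral _ _

theorem continuousOn_curvEnergy (hγ : SmoothFamily I γ) (hI : UniqueDiffOn ℝ I)
    (hreg : ∀ u, ∀ t ∈ I, deriv (fun u' => γ u' t) u ≠ 0) : ContinuousOn (curvEnergy γ) I :=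
  have h : SmoothFamily I fun u t =>
      (curvGS (fun u' => γ u' t) u) ^ 2 * speed (fun u' => γ u' t) u :=
    ContDiffOn.mul (ContDiffOn.pow (hγ.curvGS hI hreg) 2) (hγ.speed hI hreg)
  h.continuousOn_integral _ _

theorem SmoothFamily.areaDensity (hγ : SmoothFamily I γ) (hI : UniqueDiffOn ℝ I) :
    SmoothFamily I fun u t => (γ u t).1 * deriv (fun u' => (γ u' t).2) u -
      (γ u t).2 * deriv (fun u' => (γ u' t).1) u :=
  have h₁ : SmoothFamily I fun u t => (γ u t).1 := ContDiffOn.fst hγ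
  have h₂ : SmoothFamily I fun u t => (γ u t).2 := ContDiffOn.snd hγ
  (ContDiffOn.mul h₁ (h₂.deriv_space hI)).sub (ContDiffOn.mul h₂ (h₁.deriv_space hI))

theorem continuousOn_signedArea (hγ : SmoothFamily I γ) (hI : UniqueDiffOn ℝ I) :
    ContinuousOn (signedArea γ) I :=
  continuousOn_const.mul ((hγ.areaDensity hI).continuousOn_integral _ _)

/-- The length decreases at the rate `∫ κ_s² ds`. -/
theorem hasDerivAt_clen (hI : IsOpen I) (hγ : SmoothFamily I γ)
    (hper : ∀ u, ∀ t ∈ I, γ (u + 2 * Real.pi) t = γ u t)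
    (hreg : ∀ u, ∀ t ∈ I, deriv (fun u' => γ u' t) u ≠ 0)
    (hflow : ∀ u, ∀ t ∈ I, deriv (fun t' => γ u t') t =
      (-curvGSS (fun u' => γ u' t) u) • nuG (fun u' => γ u' t) u) (ht : t ∈ I) :
    HasDerivAt (clen γ) (-curvEnergy γ t) t := by
  have hU := hI.uniqueDiffOn (𝕜 := ℝ)
  have hv := hγ.speed hU hreg
  have hκ := hγ.curvG hU hreg
  have hκs := hγ.curvGS hU hreg
  have hκss := hγ.curvGSS hU hreg
  have hp : Function.Periodic (fun u => γ u t) (2 * Real.pi) := fun u => hper u t ht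
  refine (hv.hasDerivAt_integral hI ht 0 (2 * Real.pi)).congr_deriv ?_
  have hspeed : ∀ u, deriv (fun t' => speed (fun u' => γ u' t') u) t =
      curvG (fun u' => γ u' t) u * (curvGSS (fun u' => γ u' t) u * speed (fun u' => γ u' t) u) := by
    intro u
    have hpos := speed_pos (hreg u t ht)
    have hg := (hγ.deriv_space hU).hasDerivAt_time hI ht u
    rw [hγ.deriv_comm hI ht u, funext fun u' => hflow u' t ht] at hg
    have h := ((hg.fst_component.pow 2).add (hg.snd_component.pow 2)).sqrt
      (speed_sq_arg_pos (hreg u t ht)).ne'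
    have hin := inner_deriv_normal_velocity (hreg u t ht)
      ((hγ.nuG hU hreg).hasDerivAt_slice ht u).differentiableAt
      (hκss.hasDerivAt_slice ht u).differentiableAt
    refine h.deriv.trans ?_
    change _ / (2 * speed (fun u' => γ u' t) u) = _
    rw [div_eq_iff (by positivity)]
    simp only [innerP] at hin
    simp only [Nat.cast_ofNat, Nat.add_one_sub_one, pow_one]
    linear_combination 2 * hin
  have hcont := ((hκ.deriv_space hU).contDiff_slice ht).continuous.mul
    (hκs.contDiff_slice ht).continuous |>.add <| (hκ.contDiff_slice ht).continuous.mul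
      ((hκs.deriv_space hU).contDiff_slice ht).continuous
  have hzero := integral_eq_zero_of_hasDerivAt_periodic
    (fun u => (hκ.hasDerivAt_slice ht u).mul (hκs.hasDerivAt_slice ht u)) hcont
    ((curvG_periodic hp).mul (curvGS_periodic hp))
  have hE : IntervalIntegrable (fun u => (curvGS (fun u' => γ u' t) u) ^ 2 *
      speed (fun u' => γ u' t) u) volume 0 (2 * Real.pi) :=
    (((hκs.contDiff_slice ht).continuous.pow 2).mul
      (hv.contDiff_slice ht).continuous).intervalIntegrable _ _
  have hparts := (intervalIntegral.integral_sub (hcont.intervalIntegrable _ _) hE).trans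
    (congrArg (· - curvEnergy γ t) hzero)
  refine (intervalIntegral.integral_congr fun u _ => ?_).trans (hparts.trans (zero_sub _))
  simp only [hspeed, Pi.add_apply, Pi.mul_apply, deriv_curvG (hreg u t ht),
    deriv_curvGS (hreg u t ht)]
  ring

/-- The signed enclosed area is stationary under the flow. -/
theorem hasDerivAt_signedArea (hI : IsOpen I) (hγ : SmoothFamily I γ)
    (hper : ∀ u, ∀ t ∈ I, γ (u + 2 * Real.pi) t = γ u t)
    (hreg : ∀ u, ∀ t ∈ I, deriv (fun u' => γ u' t) u ≠ 0)
    (hflow : ∀ u, ∀ t ∈ I, deriv (fun t' => γ u t') t =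
      (-curvGSS (fun u' => γ u' t) u) • nuG (fun u' => γ u' t) u) (ht : t ∈ I) :
    HasDerivAt (signedArea γ) 0 t := by
  have hU := hI.uniqueDiffOn (𝕜 := ℝ)
  have hp : Function.Periodic (fun u => γ u t) (2 * Real.pi) := fun u => hper u t ht
  have hx : SmoothFamily I fun u t => (γ u t).1 := ContDiffOn.fst hγ
  have hy : SmoothFamily I fun u t => (γ u t).2 := ContDiffOn.snd hγ
  have hxt := hx.deriv_time hI
  have hyt := hy.deriv_time hI
  have hκs := hγ.curvGS hU hreg
  have hvel : ∀ u, deriv (fun t' => (γ u t').1) t =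
        -curvGSS (fun u' => γ u' t) u * (nuG (fun u' => γ u' t) u).1 ∧
      deriv (fun t' => (γ u t').2) t =
        -curvGSS (fun u' => γ u' t) u * (nuG (fun u' => γ u' t) u).2 := by
    intro u
    have h := hγ.hasDerivAt_time hI ht u
    rw [hflow u t ht] at h
    exact ⟨h.fst_component.deriv, h.snd_component.deriv⟩
  have hdens : ∀ u, HasDerivAt
      (fun u => (γ u t).1 * deriv (fun t' => (γ u t').2) t -
        (γ u t).2 * deriv (fun t' => (γ u t').1) t - 2 * curvGS (fun u' => γ u' t) u)
      (deriv (fun t' => (γ u t').1 * deriv (fun u' => (γ u' t').2) u -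
        (γ u t').2 * deriv (fun u' => (γ u' t').1) u) t) u := by
    intro u
    refine ((((hx.hasDerivAt_slice ht u).mul (hyt.hasDerivAt_slice ht u)).sub
      ((hy.hasDerivAt_slice ht u).mul (hxt.hasDerivAt_slice ht u))).sub
      ((hκs.hasDerivAt_slice ht u).const_mul 2)).congr_deriv (Eq.symm ?_)
    refine (((hx.hasDerivAt_time hI ht u).mul ((hy.deriv_space hU).hasDerivAt_time hI ht u)).sub
      ((hy.hasDerivAt_time hI ht u).mul
        ((hx.deriv_space hU).hasDerivAt_time hI ht u))).deriv.trans ?_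
    have hκsu : deriv (curvGS fun u' => γ u' t) u =
        curvGSS (fun u' => γ u' t) u * speed (fun u' => γ u' t) u := deriv_curvGS (hreg u t ht)
    have hγu := deriv_eq_speed_smul (hreg u t ht)
    have hxu := (hγ.hasDerivAt_slice ht u).fst_component.deriv
    have hyu := (hγ.hasDerivAt_slice ht u).snd_component.deriv
    have hν := nuG_unit (hreg u t ht)
    rw [hx.deriv_comm hI ht u, hy.deriv_comm hI ht u, (hvel u).1, (hvel u).2, hxu, hyu, hγu]
    change _ = _ - 2 * deriv (curvGS fun u' => γ u' t) u
    rw [hκsu]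
    dsimp only
    linear_combination (-2 * curvGSS (fun u' => γ u' t) u * speed (fun u' => γ u' t) u) * hν
  have hzero := integral_eq_zero_of_hasDerivAt_periodic hdens
    (((hγ.areaDensity hU).deriv_time hI).contDiff_slice ht).continuous (p := 2 * Real.pi) (by
      intro u
      simp only [(hvel _).1, (hvel _).2, hper u t ht, curvGS_periodic hp u,
        curvGSS_periodic hp u, nuG_periodic hp u])
  have h := ((hγ.areaDensity hU).hasDerivAt_integral hI ht 0 (2 * Real.pi)).const_mul (1 / 2)
  rw [hzero, mul_zero] at h
  exact h

end Flow
/-- under the curve diffusion flow of closed plane curves with nonzero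
signed enclosed area, the signed isoperimetric ratio satisfies
`I(t) = I(0) exp(−∫₀^t (2/L) ∫ κ_s² dℓ dτ)`; in particular `|I|` is nonincreasing. -/
theorem curve_diffusion_isoperimetric_ratio
    (T : ℝ) (hT : 0 < T) (γ : ℝ → ℝ → ℝ × ℝ)
    (hsmooth : ContDiffOn ℝ (⊤ : ℕ∞) (fun p : ℝ × ℝ => γ p.1 p.2) (Set.univ ×ˢ Set.Ico 0 T))
    (hper : ∀ u : ℝ, ∀ t ∈ Set.Ico (0:ℝ) T, γ (u + 2 * Real.pi) t = γ u t)
    (hreg : ∀ u : ℝ, ∀ t ∈ Set.Ico (0:ℝ) T, deriv (fun u' => γ u' t) u ≠ 0)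
    (hflow : ∀ u : ℝ, ∀ t ∈ Set.Ico (0:ℝ) T,
      deriv (fun t' => γ u t') t
        = (- curvGSS (fun u' => γ u' t) u) • nuG (fun u' => γ u' t) u)
    (hA : signedArea γ 0 ≠ 0) :
    (∀ t ∈ Set.Ico (0:ℝ) T,
        isoRatio γ t = isoRatio γ 0 *
          Real.exp (- ∫ τ in (0:ℝ)..t,
            (2 / clen γ τ) * ∫ u in (0:ℝ)..(2 * Real.pi),
              (curvGS (fun u' => γ u' τ) u) ^ 2 * speed (fun u' => γ u' τ) u)) ∧
      AntitoneOn (fun t => |isoRatio γ t|) (Set.Ico 0 T) := by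
  have hI := uniqueDiffOn_Ico (0 : ℝ) T
  have hsub : Set.Ioo 0 T ⊆ Set.Ico 0 T := Set.Ioo_subset_Ico_self
  have hγ : SmoothFamily (Set.Ico 0 T) γ := hsmooth
  have hL : ∀ t ∈ Set.Ioo 0 T, HasDerivAt (clen γ) (-curvEnergy γ t) t := fun t ht =>
    hasDerivAt_clen isOpen_Ioo (hγ.mono hsub) (fun u s hs => hper u s (hsub hs))
      (fun u s hs => hreg u s (hsub hs)) (fun u s hs => hflow u s (hsub hs)) ht
  have hA' : ∀ t ∈ Set.Ioo 0 T, HasDerivAt (signedArea γ) 0 t := fun t ht =>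
    hasDerivAt_signedArea isOpen_Ioo (hγ.mono hsub) (fun u s hs => hper u s (hsub hs))
      (fun u s hs => hreg u s (hsub hs)) (fun u s hs => hflow u s (hsub hs)) ht
  have hLc : ContinuousOn (clen γ) (Set.Ico 0 T) := continuousOn_clen hγ hI hreg
  have hLpos : ∀ t ∈ Set.Ico 0 T, 0 < clen γ t := fun t ht => clen_pos hγ hI hreg ht
  have hEc : ContinuousOn (curvEnergy γ) (Set.Ico 0 T) := continuousOn_curvEnergy hγ hI hreg
  have h0 : (0 : ℝ) ∈ Set.Ico 0 T := ⟨le_rfl, hT⟩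
  have hIcc : ∀ t ∈ Set.Ico 0 T, Set.Icc 0 t ⊆ Set.Ico 0 T :=
    fun t ht s hs => ⟨hs.1, hs.2.trans_lt ht.2⟩
  have hIoo : ∀ t ∈ Set.Ico 0 T, Set.Ioo 0 t ⊆ Set.Ioo 0 T :=
    fun t ht s hs => ⟨hs.1, hs.2.trans ht.2⟩
  have hArea : ∀ t ∈ Set.Ico 0 T, signedArea γ t = signedArea γ 0 := by
    intro t ht
    have h := intervalIntegral.integral_eq_sub_of_hasDerivAt_of_le ht.1
      ((continuousOn_signedArea hγ hI).mono (hIcc t ht)) (fun s hs => hA' s (hIoo t ht hs))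
      intervalIntegrable_const
    rw [intervalIntegral.integral_zero] at h
    linarith
  have hlog : ∀ t ∈ Set.Ico 0 T, ∫ τ in (0 : ℝ)..t, 2 / clen γ τ * curvEnergy γ τ =
      2 * Real.log (clen γ 0) - 2 * Real.log (clen γ t) := by
    intro t ht
    have h := intervalIntegral.integral_eq_sub_of_hasDerivAt_of_le
      (f := fun s => -2 * Real.log (clen γ s)) (f' := fun τ => 2 / clen γ τ * curvEnergy γ τ) ht.1
      (continuousOn_const.mul ((hLc.mono (hIcc t ht)).log
        fun s hs => (hLpos s (hIcc t ht hs)).ne'))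
      (fun s hs => (((hL s (hIoo t ht hs)).log
        (hLpos s (hsub (hIoo t ht hs))).ne').const_mul (-2)).congr_deriv (by ring))
      (((continuousOn_const.div (hLc.mono (hIcc t ht))
        fun s hs => (hLpos s (hIcc t ht hs)).ne').mul
          (hEc.mono (hIcc t ht))).intervalIntegrable_of_Icc ht.1)
    rw [h]
    ring
  refine ⟨fun t ht => ?_, fun s hs t ht hst => ?_⟩
  · have h := hlog t ht
    simp only [curvEnergy] at h
    have hexp : Real.exp (-(2 * Real.log (clen γ 0) - 2 * Real.log (clen γ t))) =
        clen γ t ^ 2 / clen γ 0 ^ 2 := by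
      rw [neg_sub, Real.exp_sub, two_mul, two_mul, Real.exp_add, Real.exp_add,
        Real.exp_log (hLpos t ht), Real.exp_log (hLpos 0 h0), sq, sq]
    have hne := (hLpos 0 h0).ne'
    rw [h, hexp, isoRatio, isoRatio, hArea t ht]
    field_simp
  · have hanti : AntitoneOn (clen γ) (Set.Ico 0 T) := by
      refine antitoneOn_of_deriv_nonpos (convex_Ico 0 T) hLc ?_ ?_ <;> rw [interior_Ico]
      · exact fun r hr => (hL r hr).differentiableAt.differentiableWithinAt
      · intro r hr
        rw [(hL r hr).deriv]
        exact neg_nonpos.2 (curvEnergy_nonneg γ r)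
    simp only [isoRatio, abs_div, hArea s hs, hArea t ht, abs_pow, abs_of_pos (hLpos s hs),
      abs_of_pos (hLpos t ht)]
    gcongr
    · exact (hLpos t ht).le
    · exact hanti hs ht hst
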